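/- arXiv:1111.5200 — 2 statements merged into one kernel-verified Lean document; each statement's English description precedes it below -/
import Mathlib

section
/- Let β ≥ 1 and let L be a nonempty finite set of links with a power assignment under which L is 3^{-α}-feasible, and let u be a link with ℓ_u ≤ ℓ_x for every x ∈ L. Let v ∈ L be a link minimizing d(r_u, r_x) over x ∈ L and set D := d(r_u, r_v), and let w ∈ L be a link minimizing d(s_x, r_u) over x ∈ L. Then every link x ∈ L with x ≠ w satisfies d(s_x, r_u) ≥ D/2. -/
open Finset MeasureTheory
open scoped Classical

/-- A wireless link: an ordered sender–receiver pair of points in a metric space. -/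
structure Link (X : Type*) where
  sender : X
  receiver : X

variable {X : Type*} [MetricSpace X]

/-- The length `ℓ_v` of a link. -/
noncomputable def linkLen (v : Link X) : ℝ := dist v.sender v.receiver

/-- The asymmetric distance `d_{wv}` from the sender of `w` to the receiver of `v`. -/
noncomputable def linkDist (w v : Link X) : ℝ := dist w.sender v.receiver

/-- The constant `c_v = β/(1 - β N ℓ_v^α / P_v)`. -/
noncomputable def cConst (α β N : ℝ) (pw : Link X → ℝ) (v : Link X) : ℝ :=
  β / (1 - β * N * linkLen v ^ α / pw v)

/-- The (thresholded) affectance `a_w(v)` of link `w` on link `v`. -/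
noncomputable def aff (α β N : ℝ) (pw : Link X → ℝ) (w v : Link X) : ℝ :=
  if w = v then 0
  else min 1 (cConst α β N pw v * (pw w / pw v) * (linkLen v / linkDist w v) ^ α)

/-- `a_S(v) = Σ_{w ∈ S} a_w(v)`. -/
noncomputable def affIn (α β N : ℝ) (pw : Link X → ℝ) (S : Finset (Link X)) (v : Link X) : ℝ :=
  ∑ w ∈ S, aff α β N pw w v

/-- `a_v(S) = Σ_{w ∈ S} a_v(w)`. -/
noncomputable def affOut (α β N : ℝ) (pw : Link X → ℝ) (v : Link X) (S : Finset (Link X)) : ℝ :=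
  ∑ w ∈ S, aff α β N pw v w

/-- The noise constant is at least one when `β ≥ 1` and the power beats the noise. -/
lemma one_le_cConst {α β N : ℝ} {pw : Link X → ℝ} {v : Link X} (hβ : 1 ≤ β) (hN : 0 ≤ N)
    (hpw : 0 < pw v) (hnoise : β * N * linkLen v ^ α < pw v) : 1 ≤ cConst α β N pw v := by
  have hlen : 0 ≤ linkLen v := dist_nonneg
  have hfrac : 0 ≤ β * N * linkLen v ^ α / pw v := by positivity
  have hlt : β * N * linkLen v ^ α / pw v < 1 := (div_lt_one hpw).2 hnoise
  rw [cConst, le_div_iff₀ (by linarith)]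
  linarith

lemma aff_nonneg {α β N : ℝ} {pw : Link X → ℝ} {w v : Link X} (hc : 0 ≤ cConst α β N pw v)
    (hw : 0 ≤ pw w) (hv : 0 ≤ pw v) : 0 ≤ aff α β N pw w v := by
  have hlen : 0 ≤ linkLen v := dist_nonneg
  have hdist : 0 ≤ linkDist w v := dist_nonneg
  unfold aff
  split_ifs
  · exact le_rfl
  · positivity

/-- An affectance bound below the threshold `1` bounds the relative received power. -/
lemma power_ratio_mul_le_of_aff_le {α β N γ : ℝ} {pw : Link X → ℝ} {w v : Link X}
    (hne : w ≠ v) (hc : 1 ≤ cConst α β N pw v) (hw : 0 ≤ pw w) (hv : 0 ≤ pw v)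
    (hγ : γ < 1) (h : aff α β N pw w v ≤ γ) :
    pw w / pw v * (linkLen v / linkDist w v) ^ α ≤ γ := by
  have hlen : 0 ≤ linkLen v := dist_nonneg
  have hdist : 0 ≤ linkDist w v := dist_nonneg
  rw [aff, if_neg hne, min_le_iff] at h
  have h' := h.resolve_left (not_le.2 hγ)
  rw [mul_assoc] at h'
  exact (le_mul_of_one_le_left (by positivity) hc).trans h'

/-- Two links whose mutual affectances are at most `3 ^ (-α)` are well separated,
whatever their powers. -/
lemma nine_mul_linkLen_mul_le {α β N : ℝ} {pw : Link X → ℝ} {w v : Link X} (hα : 0 < α)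
    (hne : w ≠ v) (hcw : 1 ≤ cConst α β N pw w) (hcv : 1 ≤ cConst α β N pw v)
    (hw : 0 < pw w) (hv : 0 < pw v) (hdwv : 0 < linkDist w v) (hdvw : 0 < linkDist v w)
    (hwv : aff α β N pw w v ≤ (3 : ℝ) ^ (-α)) (hvw : aff α β N pw v w ≤ (3 : ℝ) ^ (-α)) :
    9 * (linkLen v * linkLen w) ≤ linkDist w v * linkDist v w := by
  have hlv : 0 ≤ linkLen v := dist_nonneg
  have hlw : 0 ≤ linkLen w := dist_nonneg
  have hγ : (3 : ℝ) ^ (-α) < 1 :=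
    Real.rpow_lt_one_of_one_lt_of_neg (by norm_num) (by linarith)
  have h₁ := power_ratio_mul_le_of_aff_le hne hcv hw.le hv.le hγ hwv
  have h₂ := power_ratio_mul_le_of_aff_le hne.symm hcw hv.le hw.le hγ hvw
  have hprod := mul_le_mul h₁ h₂ (by positivity) (by positivity)
  have hcancel : pw w / pw v * (linkLen v / linkDist w v) ^ α *
      (pw v / pw w * (linkLen w / linkDist v w) ^ α) =
      (linkLen v / linkDist w v * (linkLen w / linkDist v w)) ^ α := by
    rw [Real.mul_rpow (by positivity) (by positivity)]
    field_simp
  have hnine : (3 : ℝ) ^ (-α) * (3 : ℝ) ^ (-α) = (1 / 9 : ℝ) ^ α := by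
    rw [← Real.mul_rpow (by norm_num) (by norm_num), Real.rpow_neg (by norm_num),
      ← Real.inv_rpow (by norm_num)]
    norm_num
  rw [hcancel, hnine, Real.rpow_le_rpow_iff (by positivity) (by norm_num) hα,
    div_mul_div_comm, div_le_iff₀ (by positivity)] at hprod
  linarith

/-- If the senders of `x` and `y` lie within `D / 2` of a point `p`, and the receiver of `x`
is at distance at least `D` from `p`, then the sender of `y` is close to the receiver of `x`. -/
lemma linkDist_lt_three_mul_linkLen {x y : Link X} {p : X} {D : ℝ}
    (hx : dist x.sender p < D / 2) (hy : dist y.sender p < D / 2)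
    (hD : D ≤ dist p x.receiver) : linkDist y x < 3 * linkLen x := by
  unfold linkDist linkLen
  have h₁ := dist_triangle y.sender p x.receiver
  have h₂ := dist_triangle p x.sender x.receiver
  rw [dist_comm p x.sender] at h₂
  linarith

/-- Let `β ≥ 1`, let `L` be a nonempty finite `3^{-α}`-feasible set of
links, and let `u` be a link with `ℓ_u ≤ ℓ_x` for every `x ∈ L`. If `v ∈ L` minimizes
`d(r_u, r_x)` over `x ∈ L`, `D := d(r_u, r_v)`, and `w ∈ L` minimizes `d(s_x, r_u)` over
`x ∈ L`, then every `x ∈ L` with `x ≠ w` satisfies `d(s_x, r_u) ≥ D/2`. -/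
theorem stmt_4 {X : Type*} [MetricSpace X] (α β N : ℝ) (pw : Link X → ℝ)
    (L : Finset (Link X)) (u v w : Link X)
    (hα : 0 < α) (hβ : 1 ≤ β) (hN : 0 ≤ N)
    (hne : L.Nonempty)
    (hlen : ∀ x ∈ insert u (↑L : Set (Link X)), 0 < linkLen x)
    (hpw : ∀ x ∈ insert u (↑L : Set (Link X)), 0 < pw x)
    (hnoise : ∀ x ∈ insert u (↑L : Set (Link X)), β * N * linkLen x ^ α < pw x)
    (hdd : ∀ x ∈ insert u (↑L : Set (Link X)), ∀ y ∈ insert u (↑L : Set (Link X)),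
      y ≠ x → 0 < linkDist y x)
    (hfeas : ∀ x ∈ L, affIn α β N pw L x ≤ (3 : ℝ) ^ (-α))
    (hushort : ∀ x ∈ L, linkLen u ≤ linkLen x)
    (hv : v ∈ L)
    (hvmin : ∀ x ∈ L, dist u.receiver v.receiver ≤ dist u.receiver x.receiver)
    (hw : w ∈ L)
    (hwmin : ∀ x ∈ L, dist w.sender u.receiver ≤ dist x.sender u.receiver) :
    ∀ x ∈ L, x ≠ w → dist u.receiver v.receiver / 2 ≤ dist x.sender u.receiver := by
  intro x hx hxw
  by_contra! hlt
  have hwlt := (hwmin x hx).trans_lt hlt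
  have hc : ∀ y ∈ L, 1 ≤ cConst α β N pw y := fun y hy =>
    one_le_cConst hβ hN (hpw y (Or.inr hy)) (hnoise y (Or.inr hy))
  have haff : ∀ y ∈ L, ∀ z ∈ L, aff α β N pw z y ≤ (3 : ℝ) ^ (-α) := fun y hy z hz =>
    (Finset.single_le_sum (f := fun z => aff α β N pw z y)
      (fun t ht => aff_nonneg (zero_le_one.trans (hc y hy)) (hpw t (Or.inr ht)).le
        (hpw y (Or.inr hy)).le) hz).trans (hfeas y hy)
  have hdwx := hdd x (Or.inr hx) w (Or.inr hw) hxw.symm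
  have hdxw := hdd w (Or.inr hw) x (Or.inr hx) hxw
  have hsep := nine_mul_linkLen_mul_le hα hxw.symm (hc w hw) (hc x hx) (hpw w (Or.inr hw))
    (hpw x (Or.inr hx)) hdwx hdxw (haff x hx w hw) (haff w hw x hx)
  have hwx := linkDist_lt_three_mul_linkLen hlt hwlt (hvmin x hx)
  have hxw' := linkDist_lt_three_mul_linkLen hwlt hlt (hvmin w hw)
  have hprod := mul_lt_mul'' hwx hxw' hdwx.le hdxw.le
  linarith
end

section
/- For all constants c₁ ≥ 1 and c₂ ≥ c₃ > 0 there exists a constant C > 0 depending only on α, c₁, c₂, c₃ with the following property. In the variable-QoS setting, let L be a finite set of links such that c₃ ≤ c_v ≤ c₂ for every v ∈ L and P_v ≤ c₁ P_w for all v, w ∈ L (nearly uniform power), and let OPT ⊆ L be feasible. Then there exist values δ_u ∈ [0,1] for u ∈ L such that Σ_{v∈L} a_u(v) δ_v ≤ C for every u ∈ L and Σ_{u∈L} δ_u ≥ |OPT|/2. -/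
open Finset MeasureTheory
open scoped Classical

variable {X : Type*} [MetricSpace X]

/-- In the variable-QoS setting, the constant `c_v = β_v/(1 - β_v N_v ℓ_v^α / P_v)`. -/
noncomputable def cConstQ (α : ℝ) (β N pw : Link X → ℝ) (v : Link X) : ℝ :=
  β v / (1 - β v * N v * linkLen v ^ α / pw v)

/-- The (thresholded) affectance `a_w(v)` of link `w` on link `v` (variable QoS). -/
noncomputable def affQ (α : ℝ) (β N pw : Link X → ℝ) (w v : Link X) : ℝ :=
  if w = v then 0
  else min 1 (cConstQ α β N pw v * (pw w / pw v) * (linkLen v / linkDist w v) ^ α)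

/-- `a_S(v) = Σ_{w ∈ S} a_w(v)` (variable QoS). -/
noncomputable def affInQ (α : ℝ) (β N pw : Link X → ℝ) (S : Finset (Link X)) (v : Link X) : ℝ :=
  ∑ w ∈ S, affQ α β N pw w v

/-- `a_v(S) = Σ_{w ∈ S} a_v(w)` (variable QoS). -/
noncomputable def affOutQ (α : ℝ) (β N pw : Link X → ℝ) (v : Link X) (S : Finset (Link X)) : ℝ :=
  ∑ w ∈ S, affQ α β N pw v w

theorem affQ_nonneg {α : ℝ} {β N pw : Link X → ℝ} {w v : Link X}
    (hc : 0 ≤ cConstQ α β N pw v) (hw : 0 ≤ pw w) (hv : 0 ≤ pw v) :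
    0 ≤ affQ α β N pw w v := by
  unfold affQ
  split_ifs
  · exact le_rfl
  · have hl : 0 ≤ linkLen v := dist_nonneg
    have hd : 0 ≤ linkDist w v := dist_nonneg
    positivity

theorem affQ_le_one (α : ℝ) (β N pw : Link X → ℝ) (w v : Link X) :
    affQ α β N pw w v ≤ 1 := by
  unfold affQ
  split_ifs
  · exact zero_le_one
  · exact min_le_left _ _

/-- If the sender of `w` is at least as close to the sender of `u` as the sender of `v` is, then
under nearly uniform power the affectance of `u` on `v` is at most a constant times that of `w`. -/
theorem affQ_le_mul_affQ {α c₁ c₃ : ℝ} (hα : 0 < α) (hc₁ : 1 ≤ c₁) (hc₃ : 0 < c₃)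
    {β N pw : Link X → ℝ} {u v w : Link X} (hlen : 0 < linkLen v)
    (hpv : 0 < pw v) (hpw : 0 < pw w)
    (huv : u ≠ v → 0 < linkDist u v) (hwv : w ≠ v) (hdwv : 0 < linkDist w v)
    (hc : c₃ ≤ cConstQ α β N pw v) (huw : pw u ≤ c₁ * pw w) (hvw : pw v ≤ c₁ * pw w)
    (hnear : dist w.sender u.sender ≤ dist v.sender u.sender) :
    affQ α β N pw u v ≤ c₁ * 3 ^ α * (1 + 1 / c₃) * affQ α β N pw w v := by
  have hcv : 0 < cConstQ α β N pw v := hc₃.trans_le hc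
  have hthree : (1 : ℝ) ≤ 3 ^ α := Real.one_le_rpow (by norm_num) hα.le
  have hbase : 1 ≤ c₁ * 3 ^ α := one_le_mul_of_one_le_of_one_le hc₁ hthree
  have hinv : 0 < 1 / c₃ := by positivity
  have hK : c₁ * 3 ^ α ≤ c₁ * 3 ^ α * (1 + 1 / c₃) := by nlinarith
  have hK' : c₁ * 3 ^ α / c₃ ≤ c₁ * 3 ^ α * (1 + 1 / c₃) := by
    rw [div_eq_mul_one_div]; nlinarith
  have htri : linkDist w v ≤ linkLen v + 2 * linkDist u v := by
    unfold linkDist linkLen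
    linarith [dist_triangle w.sender u.sender v.receiver,
      dist_triangle v.sender v.receiver u.sender, dist_comm u.sender v.receiver]
  rcases eq_or_ne u v with rfl | hne
  · have := affQ_nonneg (N := N) (β := β) (α := α) hcv.le hpw.le hpv.le
    rw [affQ, if_pos rfl]
    positivity
  have hduv := huv hne
  have hw : affQ α β N pw w v =
      min 1 (cConstQ α β N pw v * (pw w / pw v) * (linkLen v / linkDist w v) ^ α) := if_neg hwv
  rw [hw, mul_min_of_nonneg _ _ (by positivity)]
  refine le_min ((affQ_le_one ..).trans (by linarith)) ?_
  rcases le_total (linkLen v) (linkDist u v) with h | h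
  · have hratio : linkLen v / linkDist u v ≤ 3 * (linkLen v / linkDist w v) := by
      rw [← mul_div_assoc, div_le_div_iff₀ hduv hdwv]
      nlinarith
    have hrpow : (linkLen v / linkDist u v) ^ α ≤ 3 ^ α * (linkLen v / linkDist w v) ^ α := by
      rw [← Real.mul_rpow (by norm_num) (by positivity)]
      exact Real.rpow_le_rpow (by positivity) hratio hα.le
    calc affQ α β N pw u v
        ≤ cConstQ α β N pw v * (pw u / pw v) * (linkLen v / linkDist u v) ^ α := by
          rw [affQ, if_neg hne]; exact min_le_right _ _
      _ ≤ cConstQ α β N pw v * (c₁ * pw w / pw v) *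
            (3 ^ α * (linkLen v / linkDist w v) ^ α) := by gcongr
      _ = c₁ * 3 ^ α *
            (cConstQ α β N pw v * (pw w / pw v) * (linkLen v / linkDist w v) ^ α) := by ring
      _ ≤ _ := by gcongr
  · have hratio : 1 ≤ 3 * (linkLen v / linkDist w v) := by
      rw [← mul_div_assoc, one_le_div hdwv]
      linarith
    have hrpow : 1 ≤ 3 ^ α * (linkLen v / linkDist w v) ^ α := by
      rw [← Real.mul_rpow (by norm_num) (by positivity)]
      exact Real.one_le_rpow hratio hα.le
    have hpow : 1 ≤ c₁ * (pw w / pw v) := by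
      rwa [← mul_div_assoc, one_le_div hpv]
    have hcc : 1 ≤ cConstQ α β N pw v / c₃ := by rwa [one_le_div hc₃]
    calc affQ α β N pw u v ≤ 1 := affQ_le_one ..
      _ ≤ cConstQ α β N pw v / c₃ * (c₁ * (pw w / pw v)) *
            (3 ^ α * (linkLen v / linkDist w v) ^ α) :=
          one_le_mul_of_one_le_of_one_le (one_le_mul_of_one_le_of_one_le hcc hpow) hrpow
      _ = c₁ * 3 ^ α / c₃ *
            (cConstQ α β N pw v * (pw w / pw v) * (linkLen v / linkDist w v) ^ α) := by ring
      _ ≤ _ := by gcongr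

/-- If every column sum of a nonnegative matrix is at most `1`, then at least half of the rows
have sum at most `2`. -/
theorem half_card_le_card_filter_sum_le_two {ι : Type*} (S : Finset ι) (a : ι → ι → ℝ)
    (ha : ∀ v ∈ S, ∀ w ∈ S, 0 ≤ a v w) (hcol : ∀ w ∈ S, ∑ v ∈ S, a v w ≤ 1) :
    (S.card : ℝ) / 2 ≤ ((S.filter fun v => ∑ w ∈ S, a v w ≤ 2).card : ℝ) := by
  have htotal : ∑ v ∈ S, ∑ w ∈ S, a v w ≤ S.card := by
    rw [Finset.sum_comm]
    simpa using Finset.sum_le_sum hcol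
  have hbad : ((S.filter fun v => ¬ ∑ w ∈ S, a v w ≤ 2).card : ℝ) * 2
      ≤ ∑ v ∈ S, ∑ w ∈ S, a v w := by
    calc ((S.filter fun v => ¬ ∑ w ∈ S, a v w ≤ 2).card : ℝ) * 2
        = ∑ v ∈ S.filter fun v => ¬ ∑ w ∈ S, a v w ≤ 2, (2 : ℝ) := by simp
      _ ≤ ∑ v ∈ S.filter fun v => ¬ ∑ w ∈ S, a v w ≤ 2, ∑ w ∈ S, a v w :=
          Finset.sum_le_sum fun v hv => (not_le.mp (Finset.mem_filter.mp hv).2).le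
      _ ≤ _ := Finset.sum_le_sum_of_subset_of_nonneg (Finset.filter_subset _ _)
          fun v hv _ => Finset.sum_nonneg (ha v hv)
  have hsplit : ((S.filter fun v => ∑ w ∈ S, a v w ≤ 2).card : ℝ)
      + ((S.filter fun v => ¬ ∑ w ∈ S, a v w ≤ 2).card : ℝ) = S.card := by
    exact_mod_cast Finset.card_filter_add_card_filter_not (s := S) _
  linarith

/-- For all `c₁ ≥ 1` and `c₂ ≥ c₃ > 0` there is `C > 0` depending only
on `α, c₁, c₂, c₃` such that, in the variable-QoS setting with `c₃ ≤ c_v ≤ c₂` on `L` and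
nearly uniform power (`P_v ≤ c₁ P_w` on `L`), for every feasible `OPT ⊆ L` there exist
`δ_u ∈ [0,1]` with `Σ_{v∈L} a_u(v) δ_v ≤ C` for every `u ∈ L` and
`Σ_{u∈L} δ_u ≥ |OPT|/2`. -/
theorem stmt_15 (α : ℝ) (hα : 0 < α) (c₁ c₂ c₃ : ℝ)
    (hc₁ : 1 ≤ c₁) (hc₃ : 0 < c₃) (hc₂ : c₃ ≤ c₂) :
    ∃ C : ℝ, 0 < C ∧
      ∀ (X : Type*) [MetricSpace X] (β N pw : Link X → ℝ)
        (L OPT : Finset (Link X)),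
        (∀ v ∈ L, 0 < β v) →
        (∀ v ∈ L, 0 ≤ N v) →
        (∀ v ∈ L, 0 < linkLen v) →
        (∀ v ∈ L, 0 < pw v) →
        (∀ v ∈ L, β v * N v * linkLen v ^ α < pw v) →
        (∀ v ∈ L, ∀ w ∈ L, w ≠ v → 0 < linkDist w v) →
        (∀ v ∈ L, c₃ ≤ cConstQ α β N pw v ∧ cConstQ α β N pw v ≤ c₂) →
        (∀ v ∈ L, ∀ w ∈ L, pw v ≤ c₁ * pw w) →
        OPT ⊆ L →
        (∀ v ∈ OPT, affInQ α β N pw OPT v ≤ 1) →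
        ∃ δ : Link X → ℝ,
          (∀ u ∈ L, 0 ≤ δ u ∧ δ u ≤ 1) ∧
          (∀ u ∈ L, (∑ v ∈ L, affQ α β N pw u v * δ v) ≤ C) ∧
          (OPT.card : ℝ) / 2 ≤ ∑ u ∈ L, δ u := by
  have hK : 0 < c₁ * 3 ^ α * (1 + 1 / c₃) := by positivity
  refine ⟨1 + c₁ * 3 ^ α * (1 + 1 / c₃) * 2, by positivity, ?_⟩
  intro X _ β N pw L OPT _ _ hlen hpw _ hdist hc hunif hsub hfeas
  have hnonneg : ∀ v ∈ L, ∀ w ∈ L, 0 ≤ affQ α β N pw v w := fun v hv w hw =>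
    affQ_nonneg (hc₃.le.trans (hc w hw).1) (hpw v hv).le (hpw w hw).le
  have hhalf := half_card_le_card_filter_sum_le_two OPT (affQ α β N pw)
    (fun v hv w hw => hnonneg v (hsub hv) w (hsub hw)) hfeas
  set A := OPT.filter fun v => ∑ w ∈ OPT, affQ α β N pw v w ≤ 2
  have hAO : A ⊆ OPT := Finset.filter_subset _ _
  have hAL : A ⊆ L := hAO.trans hsub
  have hinter : L ∩ A = A := Finset.inter_eq_right.mpr hAL
  refine ⟨fun v => if v ∈ A then 1 else 0, fun u _ => ?_, fun u hu => ?_, ?_⟩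
  · dsimp only
    split_ifs <;> norm_num
  · simp only [mul_ite, mul_one, mul_zero, Finset.sum_ite_mem, hinter]
    rcases A.eq_empty_or_nonempty with hemp | hne
    · rw [hemp, Finset.sum_empty]
      positivity
    obtain ⟨w, hwA, hmin⟩ := A.exists_min_image (fun v => dist v.sender u.sender) hne
    have hwL := hAL hwA
    rw [← Finset.add_sum_erase A _ hwA]
    refine add_le_add (affQ_le_one ..) ?_
    calc ∑ v ∈ A.erase w, affQ α β N pw u v
        ≤ ∑ v ∈ A.erase w, c₁ * 3 ^ α * (1 + 1 / c₃) * affQ α β N pw w v := by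
          refine Finset.sum_le_sum fun v hv => ?_
          obtain ⟨hvw, hvA⟩ := Finset.mem_erase.mp hv
          have hvL := hAL hvA
          exact affQ_le_mul_affQ hα hc₁ hc₃ (hlen v hvL) (hpw v hvL) (hpw w hwL)
            (hdist v hvL u hu) hvw.symm (hdist v hvL w hwL hvw.symm) (hc v hvL).1
            (hunif u hu w hwL) (hunif v hvL w hwL) (hmin v hvA)
      _ = c₁ * 3 ^ α * (1 + 1 / c₃) * ∑ v ∈ A.erase w, affQ α β N pw w v := by
          rw [Finset.mul_sum]
      _ ≤ c₁ * 3 ^ α * (1 + 1 / c₃) * ∑ v ∈ OPT, affQ α β N pw w v := by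
          refine mul_le_mul_of_nonneg_left ?_ hK.le
          exact Finset.sum_le_sum_of_subset_of_nonneg ((Finset.erase_subset _ _).trans hAO)
            fun v hv _ => hnonneg w hwL v (hsub hv)
      _ ≤ _ := by
          gcongr
          exact (Finset.mem_filter.mp hwA).2
  · simpa [Finset.sum_ite_mem, hinter] using hhalf
end
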